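/- There exists a topological space which is CL-charming but not CO-charming; specifically, the topological sum (disjoint union) of countably infinitely many copies of the one-point Lindelöfication of an uncountable discrete space is CL-charming but not CO-charming. -/

import Mathlib

open Set Function TopologicalSpace

universe u

/-- A map between topological spaces is *perfect* if it is continuous, closed, and
every fiber is compact. -/
def PerfectMap {Y : Type*} {Z : Type*} [TopologicalSpace Y] [TopologicalSpace Z]
    (f : Y → Z) : Prop :=
  Continuous f ∧ IsClosedMap f ∧ ∀ z : Z, IsCompact (f ⁻¹' {z})

/-- A topological space `X` is a *Lindelöf Σ-space* if there exist a topological space `Y`,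
a continuous surjection from `Y` onto `X`, and a perfect surjection from `Y` onto some
second-countable space. -/
def IsLindelofSigma (X : Type u) [TopologicalSpace X] : Prop :=
  ∃ (Y : Type u) (tY : TopologicalSpace Y) (Z : Type u) (tZ : TopologicalSpace Z),
    @SecondCountableTopology Z tZ ∧
    (∃ f : Y → X, @Continuous Y X tY _ f ∧ Surjective f) ∧
    (∃ g : Y → Z, @PerfectMap Y Z tY tZ g ∧ Surjective g)

/-- A topological space `X` is a *charming space* if there is a subset `Y` of `X` that is a
Lindelöf Σ-space in the subspace topology and such that for every open `U ⊇ Y`,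
the set `X \ U` is a Lindelöf Σ-space in the subspace topology. -/
def IsCharming (X : Type u) [TopologicalSpace X] : Prop :=
  ∃ Y : Set X, IsLindelofSigma Y ∧
    ∀ U : Set X, IsOpen U → Y ⊆ U → IsLindelofSigma ↥(Uᶜ)

/-- A *CL-charming* space: the shell `Y` can be chosen closed. -/
def IsCLCharming (X : Type u) [TopologicalSpace X] : Prop :=
  ∃ Y : Set X, IsClosed Y ∧ IsLindelofSigma Y ∧
    ∀ U : Set X, IsOpen U → Y ⊆ U → IsLindelofSigma ↥(Uᶜ)

/-- A *CO-charming* space: the shell `Y` can be chosen compact. -/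
def IsCOCharming (X : Type u) [TopologicalSpace X] : Prop :=
  ∃ Y : Set X, IsCompact Y ∧ IsLindelofSigma Y ∧
    ∀ U : Set X, IsOpen U → Y ⊆ U → IsLindelofSigma ↥(Uᶜ)

/-- A space has a *countable network* if there is a countable family `N` of subsets such that
every point in every open set `V` is contained in a member of `N` contained in `V`. -/
def HasCountableNetwork (X : Type u) [TopologicalSpace X] : Prop :=
  ∃ N : Set (Set X), N.Countable ∧
    ∀ x : X, ∀ V : Set X, IsOpen V → x ∈ V → ∃ n ∈ N, x ∈ n ∧ n ⊆ V

/-- A topological space `X` is *weak (4,4)-structured* if there exist a topological space `Y`,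
a continuous surjection from `Y` onto `X`, and a perfect surjection from `Y` onto some
charming space. -/
def IsWeak44Structured (X : Type u) [TopologicalSpace X] : Prop :=
  ∃ (Y : Type u) (tY : TopologicalSpace Y) (M : Type u) (tM : TopologicalSpace M),
    @IsCharming M tM ∧
    (∃ f : Y → X, @Continuous Y X tY _ f ∧ Surjective f) ∧
    (∃ g : Y → M, @PerfectMap Y M tY tM g ∧ Surjective g)

/-!
In a space where every countable set is closed, compact sets are finite. Such a space, if it is
Lindelöf Σ, is even countable: with `f : Y → X` and a perfect `g : Y → Z` as in the definition,
`f '' (g ⁻¹' V)` is no larger than the finite set `f '' (g ⁻¹' {z})` for a small enough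
neighborhood `V` of `z`, and countably many such `V` cover `Z`.

In the topological sum every countable set is closed. The set of the points at infinity is a closed
countable shell, because a neighborhood of it misses only countably many points of each summand.
A compact shell would be finite, so it would miss an entire summand; that summand would then be
Lindelöf Σ, although it is uncountable.
-/

open scoped Topology

/-- A *weak P-space*: every countable subset is closed. Equivalently, as the notion is usually
phrased, no point lies in the closure of a countable set of other points. -/
class WeakPSpace (X : Type*) [TopologicalSpace X] : Prop where
  isClosed_of_countable : ∀ ⦃C : Set X⦄, C.Countable → IsClosed C

namespace WeakPSpace

theorem of_injective_continuous {X Y : Type*} [TopologicalSpace X] [TopologicalSpace Y]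
    [WeakPSpace Y] {f : X → Y} (hinj : Injective f) (hf : Continuous f) : WeakPSpace X where
  isClosed_of_countable C hC := by
    rw [← preimage_image_eq C hinj]
    exact (isClosed_of_countable (hC.image f)).preimage hf

theorem of_isOpen_of_countable_compl {X : Type*} [TopologicalSpace X]
    (h : ∀ U : Set X, Uᶜ.Countable → IsOpen U) : WeakPSpace X where
  isClosed_of_countable C hC := isOpen_compl_iff.1 (h Cᶜ (by rwa [compl_compl]))

instance subtype {X : Type*} [TopologicalSpace X] [WeakPSpace X] (s : Set X) : WeakPSpace s :=
  of_injective_continuous Subtype.val_injective continuous_subtype_val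

instance sigma {ι : Type*} {X : ι → Type*} [∀ i, TopologicalSpace (X i)]
    [∀ i, WeakPSpace (X i)] : WeakPSpace (Σ i, X i) where
  isClosed_of_countable _ hC :=
    isClosed_sigma_iff.2 fun _ => isClosed_of_countable (hC.preimage sigma_mk_injective)

variable {X : Type*} [TopologicalSpace X] [WeakPSpace X]

instance discreteTopology_of_countable [Countable X] : DiscreteTopology X :=
  discreteTopology_iff_forall_isClosed.2 fun s => isClosed_of_countable s.to_countable

theorem finite_of_isCompact {K : Set X} (hK : IsCompact K) : K.Finite := by
  by_contra hinf
  obtain ⟨C, hCK, hCcount, hCinf⟩ := Set.Infinite.exists_subset_countable_infinite hinf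
  have hCcompact : IsCompact C := hK.of_isClosed_subset (isClosed_of_countable hCcount) hCK
  have : Countable C := hCcount.to_subtype
  exact hCinf (hCcompact.finite (isDiscrete_iff_discreteTopology.2 inferInstance))

theorem exists_mem_nhds_image_preimage_subset {Y Z : Type*} [TopologicalSpace Y]
    [TopologicalSpace Z] [FirstCountableTopology Z] {f : Y → X} {g : Y → Z}
    (hf : Continuous f) (hg : IsClosedMap g) (z : Z) :
    ∃ V ∈ 𝓝 z, f '' (g ⁻¹' V) ⊆ f '' (g ⁻¹' {z}) := by
  obtain ⟨V, hV⟩ := (𝓝 z).exists_antitone_basis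
  by_contra! hcon
  choose x hxV hxz using fun n => not_subset.1 (hcon (V n) (hV.mem n))
  have hclosed : IsClosed (g '' (f ⁻¹' range x)) :=
    hg _ ((isClosed_of_countable (countable_range x)).preimage hf)
  have hz : z ∉ g '' (f ⁻¹' range x) := by
    rintro ⟨y, ⟨n, hn⟩, rfl⟩
    exact hxz n ⟨y, rfl, hn.symm⟩
  obtain ⟨n, hn⟩ := hV.mem_iff.1 (hclosed.isOpen_compl.mem_nhds hz)
  obtain ⟨y, hyV, hyx⟩ := hxV n
  exact hn hyV ⟨y, ⟨n, hyx.symm⟩, rfl⟩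

end WeakPSpace

namespace IsLindelofSigma

theorem of_countable (X : Type*) [TopologicalSpace X] [Countable X] : IsLindelofSigma X := by
  let _ : TopologicalSpace X := ⊥
  have : DiscreteTopology X := ⟨rfl⟩
  exact ⟨X, ⊥, X, ⊥, inferInstance, ⟨id, continuous_bot, surjective_id⟩,
    ⟨id, ⟨continuous_id, IsClosedMap.id, fun _ => isCompact_singleton⟩, surjective_id⟩⟩

theorem countable {X : Type*} [TopologicalSpace X] [WeakPSpace X] (hX : IsLindelofSigma X) :
    Countable X := by
  obtain ⟨Y, _, Z, _, _, ⟨f, hf, hfsurj⟩, ⟨g, ⟨-, hgclosed, hgcompact⟩, -⟩⟩ := hX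
  choose V hV hVsub using WeakPSpace.exists_mem_nhds_image_preimage_subset hf hgclosed
  have hfinite (z : Z) : (f '' (g ⁻¹' V z)).Finite :=
    (WeakPSpace.finite_of_isCompact ((hgcompact z).image hf)).subset (hVsub z)
  obtain ⟨s, hs, hcover⟩ := TopologicalSpace.countable_cover_nhds hV
  have hunion : univ = ⋃ z ∈ s, f '' (g ⁻¹' V z) := calc
    univ = f '' (g ⁻¹' ⋃ z ∈ s, V z) := by rw [hcover, preimage_univ, image_univ, hfsurj.range_eq]
    _ = ⋃ z ∈ s, f '' (g ⁻¹' V z) := by simp only [preimage_iUnion₂, image_iUnion₂]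
  rw [← countable_univ_iff, hunion]
  exact hs.biUnion fun z _ => (hfinite z).countable

end IsLindelofSigma

theorem IsCLCharming.of_countable {X : Type*} [TopologicalSpace X] {Y : Set X}
    (hclosed : IsClosed Y) (hcount : Y.Countable)
    (hcompl : ∀ U : Set X, IsOpen U → Y ⊆ U → Uᶜ.Countable) : IsCLCharming X := by
  refine ⟨Y, hclosed, ?_, fun U hU hYU => ?_⟩
  · have := hcount.to_subtype
    exact .of_countable _
  · have := (hcompl U hU hYU).to_subtype
    exact .of_countable _

theorem IsCOCharming.exists_finite_forall_isClosed_countable {X : Type*} [TopologicalSpace X]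
    [WeakPSpace X] (hX : IsCOCharming X) :
    ∃ F : Set X, F.Finite ∧ ∀ C : Set X, IsClosed C → Disjoint F C → C.Countable := by
  obtain ⟨F, hF, -, hcompl⟩ := hX
  refine ⟨F, WeakPSpace.finite_of_isCompact hF, fun C hC hFC => ?_⟩
  have hsigma := hcompl Cᶜ hC.isOpen_compl hFC.subset_compl_right
  rw [compl_compl] at hsigma
  exact hsigma.countable

theorem countable_of_countable_preimage_sigmaMk {ι : Type*} {X : ι → Type*} [Countable ι]
    {s : Set (Σ i, X i)} (hs : ∀ i, (Sigma.mk i ⁻¹' s).Countable) : s.Countable := by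
  rw [← iUnion_image_preimage_sigma_mk_eq_self (s := s)]
  exact countable_iUnion fun i => (hs i).image _

section Sigma

variable {ι : Type*} {X : ι → Type*} [∀ i, TopologicalSpace (X i)]

theorem isCLCharming_sigma [Countable ι] {p : ∀ i, X i} (hclosed : ∀ i, IsClosed {p i})
    (hcompl : ∀ i, ∀ U : Set (X i), IsOpen U → p i ∈ U → Uᶜ.Countable) :
    IsCLCharming (Σ i, X i) := by
  refine .of_countable (Y := univ.sigma fun i => {p i}) ?_ ?_ fun U hU hpU => ?_
  · refine isClosed_sigma_iff.2 fun i => ?_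
    rw [mk_preimage_sigma (mem_univ i)]
    exact hclosed i
  · rw [sigma_singleton]
    exact countable_univ.image _
  · exact countable_of_countable_preimage_sigmaMk fun i =>
      hcompl i _ (isOpen_sigma_iff.1 hU i) (hpU ⟨mem_univ i, rfl⟩)

theorem not_isCOCharming_sigma [Infinite ι] [∀ i, WeakPSpace (X i)] [∀ i, Uncountable (X i)] :
    ¬ IsCOCharming (Σ i, X i) := by
  intro hCO
  obtain ⟨F, hF, hcount⟩ := hCO.exists_finite_forall_isClosed_countable
  obtain ⟨i, hi⟩ := (hF.image Sigma.fst).exists_notMem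
  have hdisj : Disjoint F (range (Sigma.mk i)) := by
    rw [disjoint_right]
    rintro _ ⟨x, rfl⟩ hx
    exact hi ⟨_, hx, rfl⟩
  have himage : (Sigma.mk i '' univ : Set (Σ i, X i)).Countable := by
    rw [image_univ]
    exact hcount _ Topology.IsClosedEmbedding.sigmaMk.isClosed_range hdisj
  exact not_countable_univ
    (countable_of_injective_of_countable_image sigma_mk_injective.injOn himage)

theorem sum_of_lindelofications_CL_not_CO_general [Countable ι] [Infinite ι]
    [∀ i, WeakPSpace (X i)] [∀ i, Uncountable (X i)] {p : ∀ i, X i}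
    (hcompl : ∀ i, ∀ U : Set (X i), IsOpen U → p i ∈ U → Uᶜ.Countable) :
    IsCLCharming (Σ i, X i) ∧ ¬ IsCOCharming (Σ i, X i) :=
  ⟨isCLCharming_sigma (fun _ => WeakPSpace.isClosed_of_countable (countable_singleton _)) hcompl,
    not_isCOCharming_sigma⟩

end Sigma

/-- The topological sum of countably many copies of the one-point Lindelöfication of an
uncountable discrete space is CL-charming but not CO-charming. -/
theorem sum_of_lindelofications_CL_not_CO {X : Type u} [TopologicalSpace X] (p : X)
    (hopen : ∀ U : Set X, IsOpen U ↔ (p ∈ U → (Uᶜ : Set X).Countable))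
    (huncountable : ¬ (({p}ᶜ : Set X)).Countable) :
    IsCLCharming (Σ _ : ℕ, X) ∧ ¬ IsCOCharming (Σ _ : ℕ, X) := by
  have : WeakPSpace X := .of_isOpen_of_countable_compl fun U hU => (hopen U).2 fun _ => hU
  have : Uncountable X := not_countable_iff.1 fun _ => huncountable (to_countable _)
  exact sum_of_lindelofications_CL_not_CO_general fun _ U hU => (hopen U).1 hU
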